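/- arXiv:1812.10582 — 2 statements merged into one kernel-verified Lean document; each statement's English description precedes it below -/
import Mathlib

section
/- Let v1, v2, v3 ∈ ℝ² be three non-collinear points with ‖v1 − v3‖ ≤ ‖v2 − v3‖ ≤ ‖v1 − v2‖ (so (v1, v3) is a shortest side of the triangle). Then p13 = (1/π)·∫₀^π P_{13}(φ) dφ ≥ 1/3. -/
/-!
The three pairs of a non-constant triple share the probability one, so it suffices that
`{v1, v3}` survives at least as often as each of the other two pairs. To compare `{v1, v3}` with
`{v2, v3}`, move `v1` away from `v3` along their common ray to a point `w` at the distance of `v2`.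
At every angle this can only make `{v1, v3}` less likely and `{v2, v3}` more likely to survive,
while in the isosceles triangle `w v3 v2` the reflection of the angle that swaps the two legs
shows that the two pairs survive equally often.
-/

open Real MeasureTheory

/-- Projection of a point of `ℝ²` onto the unit direction `(cos φ, sin φ)`. -/
noncomputable def proj (v : EuclideanSpace ℝ (Fin 2)) (φ : ℝ) : ℝ :=
  v 0 * Real.cos φ + v 1 * Real.sin φ

/-- Probability that a uniformly random cut point in the projected range separates the point
projecting to `xm` from the pair projecting to `xi, xj`, i.e. that the pair `{i,j}` survives. -/
noncomputable def cutProb (xi xj xm : ℝ) : ℝ :=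
  if (xm < xi ∧ xm < xj) ∨ (xi < xm ∧ xj < xm) then
    min |xm - xi| |xm - xj| / (max xi (max xj xm) - min xi (min xj xm))
  else 0

/-- `p_{ij}`: the probability that the pair `{vi, vj}` (third point `vm`) survives the
projected random cut, averaged over a uniform projection angle `φ ∈ [0, π)`. -/
noncomputable def survProb (vi vj vm : EuclideanSpace ℝ (Fin 2)) : ℝ :=
  (1 / Real.pi) * ∫ φ in (0:ℝ)..Real.pi, cutProb (proj vi φ) (proj vj φ) (proj vm φ)

lemma monotoneOn_sub_div_sub {k : Type*} [Field k] [LinearOrder k] [IsStrictOrderedRing k] {x y : k}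
    (hyx : y ≤ x) : MonotoneOn (fun t => (t - x) / (t - y)) (Set.Ici x) := by
  intro s (hs : x ≤ s) t _ hst
  rcases hs.eq_or_lt with rfl | hxs
  · simpa only [sub_self, zero_div] using
      div_nonneg (sub_nonneg.2 hst) (sub_nonneg.2 (hyx.trans hst))
  · have hys : 0 < s - y := by linarith
    have hyt : 0 < t - y := by linarith
    rw [div_le_div_iff₀ hys hyt]
    nlinarith [mul_nonneg (sub_nonneg.2 hyx) (sub_nonneg.2 hst)]

lemma countable_setOf_cos_eq_zero : {x : ℝ | cos x = 0}.Countable := by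
  refine (Set.countable_range fun k : ℤ => (2 * k + 1) * π / 2).mono fun x hx => ?_
  obtain ⟨k, hk⟩ := cos_eq_zero_iff.1 hx
  exact ⟨k, hk.symm⟩

lemma exists_norm_sub_eq_and_mem_segment {E : Type*} [NormedAddCommGroup E] [NormedSpace ℝ E]
    {b u v : E} (h : ‖u - b‖ ≤ ‖v - b‖) :
    ∃ w, ‖w - b‖ = ‖v - b‖ ∧ u ∈ segment ℝ b w := by
  rcases eq_or_ne u b with rfl | hub
  · exact ⟨v, rfl, left_mem_segment ℝ u v⟩
  have hu : 0 < ‖u - b‖ := norm_pos_iff.2 (sub_ne_zero.2 hub)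
  have hv : 0 < ‖v - b‖ := hu.trans_le h
  refine ⟨AffineMap.lineMap b u (‖v - b‖ / ‖u - b‖), ?_, ?_⟩
  · rw [← dist_eq_norm, dist_lineMap_left, dist_comm, dist_eq_norm, norm_div, norm_norm, norm_norm,
      div_mul_cancel₀ _ hu.ne']
  · rw [segment_eq_image_lineMap]
    refine ⟨‖u - b‖ / ‖v - b‖, ⟨by positivity, div_le_one_of_le₀ h hv.le⟩, ?_⟩
    rw [AffineMap.lineMap_lineMap_right, div_mul_div_cancel₀ hv.ne', div_self hu.ne',
      AffineMap.lineMap_apply_one]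

section CutProb

variable {b x y z : ℝ}

lemma cutProb_comm (x y z : ℝ) : cutProb x y z = cutProb y x z := by
  simp only [cutProb, min_comm |z - x|, max_left_comm x, min_left_comm x, and_comm (a := z < x),
    and_comm (a := x < z)]

lemma cutProb_neg (x y z : ℝ) : cutProb (-x) (-y) (-z) = cutProb x y z := by
  simp only [cutProb, neg_lt_neg_iff, max_neg_neg, min_neg_neg, neg_sub_neg, abs_sub_comm x,
    abs_sub_comm y, or_comm (a := x < z ∧ y < z)]

lemma cutProb_sub_right (x y z t : ℝ) : cutProb (x - t) (y - t) (z - t) = cutProb x y z := by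
  simp only [cutProb, sub_lt_sub_iff_right, max_sub_sub_right, min_sub_sub_right,
    sub_sub_sub_cancel_right]

lemma cutProb_self (x : ℝ) : cutProb x x x = 0 := by
  simp [cutProb]

lemma cutProb_nonneg (x y z : ℝ) : 0 ≤ cutProb x y z := by
  have hrange : min x (min y z) ≤ max x (max y z) := (min_le_left _ _).trans (le_max_left _ _)
  unfold cutProb
  split_ifs
  · exact div_nonneg (by positivity) (sub_nonneg.2 hrange)
  · rfl

lemma cutProb_eq_zero_of_le_of_le (hxz : x ≤ z) (hzy : z ≤ y) : cutProb x y z = 0 := by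
  refine if_neg ?_
  rintro (⟨hzx, -⟩ | ⟨-, hyz⟩)
  · exact hzx.not_ge hxz
  · exact hyz.not_ge hzy

lemma cutProb_eq_div_of_le_of_le (hxy : x ≤ y) (hyz : y ≤ z) :
    cutProb x y z = (z - y) / (z - x) := by
  rcases hyz.eq_or_lt with rfl | hyz'
  · rw [cutProb_eq_zero_of_le_of_le hxy le_rfl, sub_self, zero_div]
  · rw [cutProb, if_pos (.inr ⟨hxy.trans_lt hyz', hyz'⟩), max_eq_right hyz,
      max_eq_right (hxy.trans hyz), min_eq_left hyz, min_eq_left hxy,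
      abs_of_nonneg (sub_nonneg.2 (hxy.trans hyz)), abs_of_nonneg (sub_nonneg.2 hyz),
      min_eq_right (sub_le_sub_left hxy z)]

lemma cutProb_eq_div_of_ge_of_ge (hyx : y ≤ x) (hzy : z ≤ y) :
    cutProb x y z = (y - z) / (x - z) := by
  rw [← cutProb_neg, cutProb_eq_div_of_le_of_le (neg_le_neg hyx) (neg_le_neg hzy), neg_sub_neg,
    neg_sub_neg]

lemma cutProb_add_add_eq_one_of_le_of_le (hxy : x ≤ y) (hyz : y ≤ z) (hxz : x < z) :
    cutProb x y z + cutProb x z y + cutProb y z x = 1 := by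
  rw [cutProb_eq_div_of_le_of_le hxy hyz, cutProb_eq_zero_of_le_of_le hxy hyz, cutProb_comm y,
    cutProb_eq_div_of_ge_of_ge hyz hxy, add_zero, ← add_div, sub_add_sub_cancel,
    div_self (sub_pos.2 hxz).ne']

lemma cutProb_add_add_eq_one (hxy : x ≠ y) (z : ℝ) :
    cutProb x y z + cutProb x z y + cutProb y z x = 1 := by
  wlog hlt : x < y generalizing x y
  · have := this hxy.symm (hxy.symm.lt_of_le (not_lt.1 hlt))
    rw [cutProb_comm x y]
    linarith
  rcases le_total z x with hzx | hxz
  · have := cutProb_add_add_eq_one_of_le_of_le hzx hlt.le (hzx.trans_lt hlt)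
    rw [cutProb_comm x z, cutProb_comm y z]
    linarith
  rcases le_total z y with hzy | hyz
  · have := cutProb_add_add_eq_one_of_le_of_le hxz hzy hlt
    rw [cutProb_comm y z]
    linarith
  · exact cutProb_add_add_eq_one_of_le_of_le hlt.le hyz (hlt.trans_le hyz)

lemma cutProb_le_one (x y z : ℝ) : cutProb x y z ≤ 1 := by
  have hz := cutProb_nonneg x y z
  have hy := cutProb_nonneg x z y
  have hx := cutProb_nonneg y z x
  rcases ne_or_eq x y with hxy | rfl
  · linarith [cutProb_add_add_eq_one hxy z]
  rcases ne_or_eq x z with hxz | rfl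
  · linarith [cutProb_add_add_eq_one hxz x, cutProb_comm z x x]
  · exact (cutProb_self x).trans_le zero_le_one

lemma antitoneOn_cutProb_left (b z : ℝ) : AntitoneOn (fun x => cutProb x b z) (Set.Ici b) := by
  intro s (hs : b ≤ s) t (ht : b ≤ t) hst
  dsimp only
  rcases le_total z b with hzb | hbz
  · rw [cutProb_eq_div_of_ge_of_ge hs hzb, cutProb_eq_div_of_ge_of_ge ht hzb]
    rcases hzb.eq_or_lt with rfl | hzb
    · simp only [sub_self, zero_div, le_refl]
    · exact div_le_div_of_nonneg_left (by linarith) (by linarith) (by linarith)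
  rw [cutProb_comm t, cutProb_comm s]
  rcases le_total z t with hzt | htz
  · rw [cutProb_eq_zero_of_le_of_le hbz hzt]
    exact cutProb_nonneg b s z
  · rw [cutProb_eq_div_of_le_of_le ht htz, cutProb_eq_div_of_le_of_le hs (hst.trans htz)]
    exact div_le_div_of_nonneg_right (sub_le_sub_left hst z) (sub_nonneg.2 hbz)

lemma monotoneOn_cutProb_right (x b : ℝ) : MonotoneOn (cutProb x b) (Set.Ici b) := by
  intro s (hs : b ≤ s) t (ht : b ≤ t) hst
  rcases le_total x b with hxb | hbx
  · rw [cutProb_eq_div_of_le_of_le hxb hs, cutProb_eq_div_of_le_of_le hxb ht]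
    exact monotoneOn_sub_div_sub hxb hs ht hst
  rw [cutProb_comm x]
  rcases le_total s x with hsx | hxs
  · rw [cutProb_eq_zero_of_le_of_le hs hsx]
    exact cutProb_nonneg x b t
  · rw [cutProb_comm x, cutProb_eq_div_of_le_of_le hbx hxs,
      cutProb_eq_div_of_le_of_le hbx (hxs.trans hst)]
    exact monotoneOn_sub_div_sub hbx hxs (hxs.trans hst) hst

lemma cutProb_le_cutProb_left_of_mem_uIcc (hy : y ∈ Set.uIcc b x) (z : ℝ) :
    cutProb x b z ≤ cutProb y b z := by
  rcases Set.mem_uIcc.1 hy with ⟨hby, hyx⟩ | ⟨hxy, hyb⟩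
  · exact antitoneOn_cutProb_left b z hby (hby.trans hyx) hyx
  · rw [← cutProb_neg x, ← cutProb_neg y]
    exact antitoneOn_cutProb_left (-b) (-z) (neg_le_neg hyb) (neg_le_neg (hxy.trans hyb))
      (neg_le_neg hxy)

lemma cutProb_le_cutProb_right_of_mem_uIcc (hy : y ∈ Set.uIcc b x) (z : ℝ) :
    cutProb z b y ≤ cutProb z b x := by
  rcases Set.mem_uIcc.1 hy with ⟨hby, hyx⟩ | ⟨hxy, hyb⟩
  · exact monotoneOn_cutProb_right z b hby (hby.trans hyx) hyx
  · rw [← cutProb_neg z b y, ← cutProb_neg z b x]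
    exact monotoneOn_cutProb_right (-z) (-b) (neg_le_neg hyb) (neg_le_neg (hxy.trans hyb))
      (neg_le_neg hxy)

lemma measurable_cutProb {α : Type*} [MeasurableSpace α] {f g h : α → ℝ} (hf : Measurable f)
    (hg : Measurable g) (hh : Measurable h) : Measurable fun a => cutProb (f a) (g a) (h a) := by
  refine Measurable.ite ?_ (by fun_prop) measurable_const
  exact ((measurableSet_lt hh hf).inter (measurableSet_lt hh hg)).union
    ((measurableSet_lt hf hh).inter (measurableSet_lt hg hh))

end CutProb

section Proj

variable {b u v w : EuclideanSpace ℝ (Fin 2)}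

lemma isLinearMap_proj (φ : ℝ) : IsLinearMap ℝ (proj · φ) where
  map_add v w := by simp only [proj, PiLp.add_apply]; ring
  map_smul c v := by simp only [proj, PiLp.smul_apply, smul_eq_mul]; ring

lemma proj_mem_uIcc (hu : u ∈ segment ℝ b w) (φ : ℝ) :
    proj u φ ∈ Set.uIcc (proj b φ) (proj w φ) := by
  rw [← segment_eq_uIcc]
  exact image_segment ℝ ((isLinearMap_proj φ).mk' _).toAffineMap b w ▸ Set.mem_image_of_mem _ hu

lemma measurable_proj (v : EuclideanSpace ℝ (Fin 2)) : Measurable (proj v) := by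
  unfold proj
  fun_prop

lemma proj_antiperiodic (v : EuclideanSpace ℝ (Fin 2)) : Function.Antiperiodic (proj v) π := by
  intro φ
  simp only [proj, cos_add_pi, sin_add_pi]
  ring

lemma exists_proj_eq_norm_mul_cos (v : EuclideanSpace ℝ (Fin 2)) :
    ∃ θ : ℝ, ∀ φ, proj v φ = ‖v‖ * cos (φ - θ) := by
  let z : ℂ := ⟨v 0, v 1⟩
  have hz : ‖z‖ = ‖v‖ := by
    rw [EuclideanSpace.norm_eq, Complex.norm_eq_sqrt_sq_add_sq]
    simp [z, Fin.sum_univ_two]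
  have hre : ‖v‖ * cos z.arg = v 0 := hz ▸ Complex.norm_mul_cos_arg z
  have him : ‖v‖ * sin z.arg = v 1 := hz ▸ Complex.norm_mul_sin_arg z
  refine ⟨z.arg, fun φ => ?_⟩
  rw [proj, ← hre, ← him, cos_sub]
  ring

lemma exists_forall_proj_sub_eq_of_norm_eq (h : ‖u‖ = ‖v‖) :
    ∃ s : ℝ, ∀ φ, proj u (s - φ) = proj v φ ∧ proj v (s - φ) = proj u φ := by
  obtain ⟨α, hα⟩ := exists_proj_eq_norm_mul_cos u
  obtain ⟨β, hβ⟩ := exists_proj_eq_norm_mul_cos v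
  refine ⟨α + β, fun φ => ⟨?_, ?_⟩⟩
  · rw [hα, hβ, h, ← cos_neg (φ - β)]
    ring_nf
  · rw [hα, hβ, h, ← cos_neg (φ - α)]
    ring_nf

lemma ae_proj_ne_proj (h : u ≠ v) : ∀ᵐ φ, proj u φ ≠ proj v φ := by
  obtain ⟨θ, hθ⟩ := exists_proj_eq_norm_mul_cos (u - v)
  have hcount : {φ | cos (φ - θ) = 0}.Countable :=
    countable_setOf_cos_eq_zero.preimage (sub_left_injective (b := θ))
  filter_upwards [hcount.ae_notMem volume] with φ hφ heq
  refine mul_ne_zero (norm_ne_zero_iff.2 (sub_ne_zero.2 h)) hφ ?_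
  rw [← hθ, (isLinearMap_proj φ).map_sub, heq, sub_self]

end Proj

section SurvProb

variable {b u v w : EuclideanSpace ℝ (Fin 2)}

lemma cutProb_proj_sub (u b v : EuclideanSpace ℝ (Fin 2)) (φ : ℝ) :
    cutProb (proj (u - b) φ) 0 (proj (v - b) φ) =
      cutProb (proj u φ) (proj b φ) (proj v φ) := by
  rw [(isLinearMap_proj φ).map_sub, (isLinearMap_proj φ).map_sub, ← sub_self (proj b φ),
    cutProb_sub_right]

lemma intervalIntegrable_cutProb_proj (u v w : EuclideanSpace ℝ (Fin 2)) (α β : ℝ) :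
    IntervalIntegrable (fun φ => cutProb (proj u φ) (proj v φ) (proj w φ)) volume α β := by
  have hmeas := measurable_cutProb (measurable_proj u) (measurable_proj v) (measurable_proj w)
  refine (intervalIntegrable_const (c := (1 : ℝ))).mono_fun hmeas.aestronglyMeasurable ?_
  filter_upwards with φ
  rw [norm_one, norm_of_nonneg (cutProb_nonneg _ _ _)]
  exact cutProb_le_one _ _ _

lemma survProb_comm (u v w : EuclideanSpace ℝ (Fin 2)) : survProb u v w = survProb v u w := by
  simp only [survProb, cutProb_comm (proj u _)]

lemma survProb_le_survProb_of_forall_cutProb_le {u' v' w' : EuclideanSpace ℝ (Fin 2)}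
    (h : ∀ φ, cutProb (proj u φ) (proj v φ) (proj w φ) ≤
      cutProb (proj u' φ) (proj v' φ) (proj w' φ)) :
    survProb u v w ≤ survProb u' v' w' :=
  mul_le_mul_of_nonneg_left
    (intervalIntegral.integral_mono pi_pos.le (intervalIntegrable_cutProb_proj u v w 0 π)
      (intervalIntegrable_cutProb_proj u' v' w' 0 π) h)
    (one_div_pos.2 pi_pos).le

lemma survProb_le_survProb_left_of_mem_segment (hu : u ∈ segment ℝ b w)
    (v : EuclideanSpace ℝ (Fin 2)) : survProb w b v ≤ survProb u b v :=
  survProb_le_survProb_of_forall_cutProb_le fun φ =>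
    cutProb_le_cutProb_left_of_mem_uIcc (proj_mem_uIcc hu φ) _

lemma survProb_le_survProb_right_of_mem_segment (hu : u ∈ segment ℝ b w)
    (v : EuclideanSpace ℝ (Fin 2)) : survProb v b u ≤ survProb v b w :=
  survProb_le_survProb_of_forall_cutProb_le fun φ =>
    cutProb_le_cutProb_right_of_mem_uIcc (proj_mem_uIcc hu φ) _

lemma survProb_eq_survProb_of_norm_sub_eq (h : ‖u - b‖ = ‖v - b‖) :
    survProb u b v = survProb v b u := by
  obtain ⟨s, hs⟩ := exists_forall_proj_sub_eq_of_norm_eq h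
  let F : ℝ → ℝ := fun φ => cutProb (proj u φ) (proj b φ) (proj v φ)
  have hperiodic : Function.Periodic F π := fun φ => by
    simp only [F, proj_antiperiodic _ φ, cutProb_neg]
  have hreflect (φ : ℝ) : F (s - φ) = cutProb (proj v φ) (proj b φ) (proj u φ) := by
    rw [← cutProb_proj_sub, ← (hs φ).1, ← (hs φ).2, cutProb_proj_sub]
  rw [survProb, survProb]
  congr 1
  calc ∫ φ in (0 : ℝ)..π, F φ = ∫ φ in (s - π)..(s - π + π), F φ := by
        rw [hperiodic.intervalIntegral_add_eq (s - π) 0, zero_add]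
    _ = ∫ φ in (0 : ℝ)..π, F (s - φ) := by
        rw [intervalIntegral.integral_comp_sub_left, sub_add_cancel, sub_zero]
    _ = ∫ φ in (0 : ℝ)..π, cutProb (proj v φ) (proj b φ) (proj u φ) := by simp only [hreflect]

lemma survProb_le_survProb_of_norm_sub_le (h : ‖u - b‖ ≤ ‖v - b‖) :
    survProb v b u ≤ survProb u b v := by
  obtain ⟨w, hw, hu⟩ := exists_norm_sub_eq_and_mem_segment h
  calc survProb v b u ≤ survProb v b w := survProb_le_survProb_right_of_mem_segment hu v
    _ = survProb w b v := (survProb_eq_survProb_of_norm_sub_eq hw).symm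
    _ ≤ survProb u b v := survProb_le_survProb_left_of_mem_segment hu v

lemma survProb_add_add_eq_one (h : u ≠ v) (w : EuclideanSpace ℝ (Fin 2)) :
    survProb u v w + survProb u w v + survProb v w u = 1 := by
  have hsum : ∀ᵐ φ, cutProb (proj u φ) (proj v φ) (proj w φ) +
      cutProb (proj u φ) (proj w φ) (proj v φ) + cutProb (proj v φ) (proj w φ) (proj u φ) = 1 :=
    (ae_proj_ne_proj h).mono fun φ hφ => cutProb_add_add_eq_one hφ (proj w φ)
  have huvw := intervalIntegrable_cutProb_proj u v w 0 π
  have huwv := intervalIntegrable_cutProb_proj u w v 0 π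
  have hvwu := intervalIntegrable_cutProb_proj v w u 0 π
  rw [survProb, survProb, survProb, ← mul_add, ← mul_add,
    ← intervalIntegral.integral_add huvw huwv, ← intervalIntegral.integral_add (huvw.add huwv) hvwu,
    intervalIntegral.integral_congr_ae (hsum.mono fun φ hφ _ => hφ),
    intervalIntegral.integral_const, sub_zero, smul_eq_mul, mul_one, one_div_mul_cancel pi_ne_zero]

end SurvProb

theorem stmt1_general (v1 v2 v3 : EuclideanSpace ℝ (Fin 2)) (hne : v1 ≠ v2)
    (h13 : ‖v1 - v3‖ ≤ ‖v2 - v3‖) (h12 : ‖v1 - v3‖ ≤ ‖v1 - v2‖) :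
    survProb v1 v3 v2 ≥ 1 / 3 := by
  have hsum : survProb v1 v2 v3 + survProb v1 v3 v2 + survProb v2 v3 v1 = 1 :=
    survProb_add_add_eq_one hne v3
  have h23 : survProb v2 v3 v1 ≤ survProb v1 v3 v2 := survProb_le_survProb_of_norm_sub_le h13
  have h21 : survProb v2 v1 v3 ≤ survProb v3 v1 v2 :=
    survProb_le_survProb_of_norm_sub_le (by rwa [norm_sub_rev v3, norm_sub_rev v2])
  rw [survProb_comm v2, survProb_comm v3] at h21
  linarith

theorem stmt1 (v1 v2 v3 : EuclideanSpace ℝ (Fin 2))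
    (hcol : ¬ Collinear ℝ ({v1, v2, v3} : Set (EuclideanSpace ℝ (Fin 2))))
    (h13 : ‖v1 - v3‖ ≤ ‖v2 - v3‖) (h23 : ‖v2 - v3‖ ≤ ‖v1 - v2‖) :
    survProb v1 v3 v2 ≥ 1 / 3 :=
  stmt1_general v1 v2 v3 (ne₁₂_of_not_collinear hcol) h13 (h13.trans h23)
end

section
/- Let θ₁, θ₂, θ₃ be positive reals with θ₁ + θ₂ + θ₃ = π and θ₃ ≤ θ₂. Then (1/θ₁)·∫₀^{θ₁} (sin θ · sin(θ₁ + θ₃)) / (sin(θ + θ₃) · sin θ₁) dθ ≥ (1/θ₁)·∫₀^{θ₁} (sin θ · sin(θ₁ + θ₂)) / (sin(θ + θ₂) · sin θ₁) dθ. -/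
open MeasureTheory

/-!
Fix the angle `a` opposite the longest edge. Only the factor `sin (a + c) / sin (x + c)` of the
integrand depends on the angle `c` between that edge and the scored one, and it decreases in `c`
because `sin (a + c) * sin (x + d) - sin (a + d) * sin (x + c) = sin (a - x) * sin (d - c)`.
So the two integrands compare pointwise.
-/

section

open Real Set

variable {a c x : ℝ}

/-- In a triangle with longest edge `ℓ`, opposite angle `a`, and another edge `e` making the angle
`c` with `ℓ`, this is the ratio of the projection of `e` to that of `ℓ`, where `x` is the angle
between `e` and the perpendicular to the line of projection. The projections are `|e| * sin x` and
`|ℓ| * sin (x + c)`, and `|e| / |ℓ| = sin (a + c) / sin a` by the law of sines. -/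
noncomputable def projectionRatio (a c x : ℝ) : ℝ :=
  sin x * sin (a + c) / (sin (x + c) * sin a)

/-- The probability of scoring the edge that makes the angle `c` with the longest edge, given that
the longest edge has the longest projection: the mean of `projectionRatio a c` over `[0, a]`.
For a triangle with angles `θ₁ ≥ θ₂ ≥ θ₃`, the paper's `p₁₃^{12}` and `p₂₃^{12}` are the values at
`a = θ₁` and `c = θ₃`, `c = θ₂` respectively. -/
noncomputable def scoringProbability (a c : ℝ) : ℝ :=
  (1 / a) * ∫ x in (0 : ℝ)..a, projectionRatio a c x

lemma sin_add_mul_sin_add_sub_sin_add_mul_sin_add (a x c d : ℝ) :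
    sin (a + c) * sin (x + d) - sin (a + d) * sin (x + c) = sin (a - x) * sin (d - c) := by
  simp only [sin_add, sin_sub]
  ring

lemma antitoneOn_sin_add_div_sin_add (hxa : x ≤ a) :
    AntitoneOn (fun c ↦ sin (a + c) / sin (x + c)) (Ioo (-x) (π - a)) := by
  rintro c ⟨hxc, hca⟩ d ⟨hxd, hda⟩ hcd
  have sin_c_pos : 0 < sin (x + c) := sin_pos_of_pos_of_lt_pi (by linarith) (by linarith)
  have sin_d_pos : 0 < sin (x + d) := sin_pos_of_pos_of_lt_pi (by linarith) (by linarith)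
  have sin_ax_nonneg : 0 ≤ sin (a - x) :=
    sin_nonneg_of_nonneg_of_le_pi (by linarith) (by linarith)
  have sin_dc_nonneg : 0 ≤ sin (d - c) :=
    sin_nonneg_of_nonneg_of_le_pi (by linarith) (by linarith)
  refine (div_le_div_iff₀ sin_d_pos sin_c_pos).mpr (sub_nonneg.mp ?_)
  rw [sin_add_mul_sin_add_sub_sin_add_mul_sin_add]
  exact mul_nonneg sin_ax_nonneg sin_dc_nonneg

lemma projectionRatio_eq_mul (a c x : ℝ) :
    projectionRatio a c x = sin x / sin a * (sin (a + c) / sin (x + c)) := by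
  rw [projectionRatio, div_mul_div_comm, mul_comm (sin a)]

lemma antitoneOn_projectionRatio (hx : x ∈ Icc 0 a) :
    AntitoneOn (fun c ↦ projectionRatio a c x) (Ioo 0 (π - a)) := by
  rintro c ⟨hc, hca⟩ d ⟨hd, hda⟩ hcd
  have weight_nonneg : 0 ≤ sin x / sin a :=
    div_nonneg (sin_nonneg_of_nonneg_of_le_pi hx.1 (by linarith [hx.2]))
      (sin_nonneg_of_nonneg_of_le_pi (hx.1.trans hx.2) (by linarith))
  simp only [projectionRatio_eq_mul]
  exact mul_le_mul_of_nonneg_left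
    (antitoneOn_sin_add_div_sin_add hx.2 ⟨by linarith [hx.1], hca⟩ ⟨by linarith [hx.1], hda⟩ hcd)
    weight_nonneg

lemma continuousOn_projectionRatio (ha : 0 < a) (hc : c ∈ Ioo 0 (π - a)) :
    ContinuousOn (projectionRatio a c) (Icc 0 a) := by
  refine ContinuousOn.div (by fun_prop) (by fun_prop) fun x hx ↦ mul_ne_zero ?_ ?_
  · exact (sin_pos_of_pos_of_lt_pi (by linarith [hx.1, hc.1]) (by linarith [hx.2, hc.2])).ne'
  · exact (sin_pos_of_pos_of_lt_pi ha (by linarith [hc.1, hc.2])).ne'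

theorem stmt10_general (ha : 0 < a) : AntitoneOn (scoringProbability a) (Ioo 0 (π - a)) := by
  intro c hc d hd hcd
  have integrable {b : ℝ} (hb : b ∈ Ioo 0 (π - a)) :
      IntervalIntegrable (projectionRatio a b) volume 0 a :=
    (continuousOn_projectionRatio ha hb).intervalIntegrable_of_Icc ha.le
  refine mul_le_mul_of_nonneg_left ?_ (one_div_nonneg.mpr ha.le)
  exact intervalIntegral.integral_mono_on ha.le (integrable hd) (integrable hc)
    fun x hx ↦ antitoneOn_projectionRatio hx hc hd hcd

end

theorem stmt10 (θ₁ θ₂ θ₃ : ℝ)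
    (h1 : 0 < θ₁) (h2 : 0 < θ₂) (h3 : 0 < θ₃)
    (hsum : θ₁ + θ₂ + θ₃ = Real.pi) (h32 : θ₃ ≤ θ₂) :
    (1 / θ₁) * ∫ θ in (0:ℝ)..θ₁,
        Real.sin θ * Real.sin (θ₁ + θ₃) / (Real.sin (θ + θ₃) * Real.sin θ₁)
      ≥ (1 / θ₁) * ∫ θ in (0:ℝ)..θ₁,
          Real.sin θ * Real.sin (θ₁ + θ₂) / (Real.sin (θ + θ₂) * Real.sin θ₁) :=
  stmt10_general h1 ⟨h3, by linarith⟩ ⟨h2, by linarith⟩ h32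
end
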